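/- arXiv:1302.0517 — 2 statements merged into one kernel-verified Lean document; each statement's English description precedes it below -/
import Mathlib

section
/- For every integer n > 2^6 = 64, every positive integer N, and every n-linear form U : (ℝ^N)^n → ℝ, one has (∑_{i₁,…,iₙ=1}^N |U(e_{i₁},…,e_{iₙ})|^{2n/(n+1)})^{(n+1)/(2n)} ≤ 1.310883 · (n-1)^{0.526322} · ‖U‖. -/
open Real

/-- The Bohnenblust--Hille quantity of an `n`-linear form on `ℓ_∞^N` over `ℝ`:
`(∑_{i₁,…,iₙ} |U(e_{i₁},…,e_{iₙ})|^{2n/(n+1)})^{(n+1)/(2n)}`. -/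
noncomputable def BHreal (n N : ℕ)
    (U : ContinuousMultilinearMap ℝ (fun _ : Fin n => (Fin N → ℝ)) ℝ) : ℝ :=
  (∑ i : Fin n → Fin N,
      |U (fun k => Pi.single (i k) (1 : ℝ))| ^ ((2 * n : ℝ) / (n + 1)))
    ^ ((n + 1 : ℝ) / (2 * n))

theorem holder_fin {ι κ : Type*} [Fintype ι] [Fintype κ] (w : κ → ℝ) (hw : ∀ j, 0 ≤ w j)
    (hw1 : ∑ j, w j = 1) (f : κ → ι → ℝ) (hf : ∀ j i, 0 ≤ f j i) :
    ∑ i, ∏ j, f j i ^ w j ≤ ∏ j, (∑ i, f j i) ^ w j := by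
  let _ : MeasurableSpace ι := ⊤
  have h := ENNReal.lintegral_prod_norm_pow_le (α := ι) (μ := MeasureTheory.Measure.count)
    Finset.univ (f := fun j i => ENNReal.ofReal (f j i)) (p := w)
    (fun j _ => (measurable_from_top).aemeasurable) hw1 (fun j _ => hw j)
  simp only [MeasureTheory.lintegral_count, tsum_fintype] at h
  have e1 : ∀ i, ∏ j, ENNReal.ofReal (f j i) ^ w j = ENNReal.ofReal (∏ j, f j i ^ w j) := by
    intro i
    rw [ENNReal.ofReal_prod_of_nonneg (fun j _ => Real.rpow_nonneg (hf j i) _)]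
    exact Finset.prod_congr rfl fun j _ => ENNReal.ofReal_rpow_of_nonneg (hf j i) (hw j)
  have e2 : ∏ j, (∑ i, ENNReal.ofReal (f j i)) ^ w j
      = ENNReal.ofReal (∏ j, (∑ i, f j i) ^ w j) := by
    rw [ENNReal.ofReal_prod_of_nonneg
      (fun j _ => Real.rpow_nonneg (Finset.sum_nonneg fun i _ => hf j i) _)]
    refine Finset.prod_congr rfl fun j _ => ?_
    rw [← ENNReal.ofReal_sum_of_nonneg (fun i _ => hf j i)]
    exact ENNReal.ofReal_rpow_of_nonneg (Finset.sum_nonneg fun i _ => hf j i) (hw j)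
  rw [e2, Finset.sum_congr rfl (fun i _ => e1 i), ← ENNReal.ofReal_sum_of_nonneg
    (fun i _ => Finset.prod_nonneg fun j _ => Real.rpow_nonneg (hf j i) _)] at h
  exact (ENNReal.ofReal_le_ofReal_iff (Finset.prod_nonneg fun j _ =>
    Real.rpow_nonneg (Finset.sum_nonneg fun i _ => hf j i) _)).1 h

theorem holder3 {ι : Type*} [Fintype ι] {m : ℕ} (α β γ : ℝ) (hα : 0 ≤ α) (hβ : 0 ≤ β)
    (hγ : 0 ≤ γ) (h1 : α + (β + m * γ) = 1) (A B : ι → ℝ) (R : Fin m → ι → ℝ)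
    (hA : ∀ i, 0 ≤ A i) (hB : ∀ i, 0 ≤ B i) (hR : ∀ k i, 0 ≤ R k i) :
    ∑ i, A i ^ α * (B i ^ β * ∏ k, R k i ^ γ)
      ≤ (∑ i, A i) ^ α * ((∑ i, B i) ^ β * ∏ k, (∑ i, R k i) ^ γ) := by
  have H := holder_fin (ι := ι) (κ := Option (Option (Fin m)))
    (fun x => x.elim α (fun y => y.elim β (fun _ => γ)))
    (by rintro (_ | _ | x) <;> simpa)
    (by simp [Fintype.sum_option, h1])
    (fun x => x.elim A (fun y => y.elim B R))
    (by rintro (_ | _ | x) s <;> simp [hA, hB, hR])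
  simpa [Fintype.prod_option] using H

theorem mink_fin {ι κ : Type*} [Fintype ι] [Fintype κ] (r : ℝ) (hr : 1 ≤ r)
    (f : κ → ι → ℝ) (hf : ∀ j i, 0 ≤ f j i) :
    (∑ i, (∑ j, f j i) ^ r) ^ (1 / r) ≤ ∑ j, (∑ i, f j i ^ r) ^ (1 / r) := by
  classical
  have : ∀ s : Finset κ, (∑ i, (∑ j ∈ s, f j i) ^ r) ^ (1 / r)
      ≤ ∑ j ∈ s, (∑ i, f j i ^ r) ^ (1 / r) := by
    intro s
    induction s using Finset.induction_on with
    | empty =>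
      have : r ≠ 0 := by positivity
      simp [Real.zero_rpow this, Real.zero_rpow (inv_ne_zero this)]
    | insert a s ha ih =>
      simp only [Finset.sum_insert ha]
      refine (Real.Lp_add_le_of_nonneg Finset.univ hr (fun i _ => hf a i)
        (fun i _ => Finset.sum_nonneg fun j _ => hf j i)).trans ?_
      gcongr
  exact this Finset.univ

noncomputable def RR {m N : ℕ} (p : ℝ) (a : (Fin m → Fin N) → ℝ) (k : Fin m) : ℝ :=
  (∑ i : Fin m → Fin N, (∑ t, a (Function.update i k t) ^ 2) ^ (p / 2)) / N

theorem sum_cons {m N : ℕ} (f : (Fin (m+1) → Fin N) → ℝ) :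
    ∑ i, f i = ∑ s : Fin N, ∑ j : Fin m → Fin N, f (Fin.cons s j) := by
  rw [← Fintype.sum_prod_type', ← (Fin.consEquiv (fun _ => Fin N)).sum_comp]
  rfl

theorem RR_succ {m N : ℕ} (p : ℝ) (a : (Fin (m+1) → Fin N) → ℝ) (k : Fin m) :
    RR p a k.succ = ∑ s, RR p (fun j => a (Fin.cons s j)) k := by
  unfold RR
  rw [sum_cons, Finset.sum_div]
  simp only [← Fin.cons_update]

theorem RR_zero {m N : ℕ} (hN : 0 < N) (p : ℝ) (a : (Fin (m+1) → Fin N) → ℝ) :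
    RR p a 0 = ∑ j, (∑ t, a (Fin.cons t j) ^ 2) ^ (p / 2) := by
  unfold RR
  rw [sum_cons]
  simp only [Fin.update_cons_zero]
  have : (N:ℝ) ≠ 0 := by positivity
  simp
  field_simp

theorem RR_nonneg {m N : ℕ} (p : ℝ) (a : (Fin m → Fin N) → ℝ) (k : Fin m) : 0 ≤ RR p a k := by
  unfold RR; positivity

theorem blei {N : ℕ} (hN : 0 < N) (p θ q : ℝ) (hp : 0 < p) (hp2 : p ≤ 2) (hθ : 0 ≤ θ) (hq : 0 < q)
    (hpq : 1 / q = (1 - θ) / p + θ / 2) :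
    ∀ m : ℕ, m * θ ≤ 1 → ∀ a : (Fin m → Fin N) → ℝ, (∀ i, 0 ≤ a i) →
      ∑ i, a i ^ q ≤ (∑ i, a i ^ p) ^ ((1 - m * θ) * q / p) * ∏ k, RR p a k ^ (θ * q / p) := by
  intro m
  induction m with
  | zero =>
    intro _ a ha
    simp [← Real.rpow_mul (ha _)]
    rw [mul_div_cancel₀ _ hp.ne']
  | succ m ih =>
    intro hm a ha
    push_cast at hm
    rw [sum_cons]
    set P : Fin N → ℝ := fun s => ∑ j : Fin m → Fin N, a (Fin.cons s j) ^ p with hP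
    have hP0 : ∀ s, 0 ≤ P s := fun s => Finset.sum_nonneg fun j _ => Real.rpow_nonneg (ha _) _
    have step : ∀ s, ∑ j : Fin m → Fin N, a (Fin.cons s j) ^ q ≤
        P s ^ ((1 - (m+1) * θ) * q / p) * ((P s ^ (2 / p)) ^ (θ * q / 2) *
          ∏ k, RR p (fun j => a (Fin.cons s j)) k ^ (θ * q / p)) := by
      intro s
      refine (ih (by linarith) (fun j => a (Fin.cons s j)) (fun j => ha _)).trans (le_of_eq ?_)
      rw [← mul_assoc, ← Real.rpow_mul (hP0 s), ← Real.rpow_add_of_nonneg (hP0 s)]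
      · congr 2
        field_simp
        ring
      · have : 0 ≤ 1 - (m+1) * θ := by linarith
        positivity
      · positivity
    refine (Finset.sum_le_sum fun s _ => step s).trans ?_
    have H := holder3 ((1 - (m+1) * θ) * q / p) (θ * q / 2) (θ * q / p)
      (by have : 0 ≤ 1 - (m+1) * θ := by linarith
          positivity) (by positivity) (by positivity)
      (by
        field_simp at hpq ⊢
        linarith) P (fun s => P s ^ (2 / p))
      (fun k s => RR p (fun j => a (Fin.cons s j)) k)
      hP0 (fun s => Real.rpow_nonneg (hP0 s) _) (fun k s => RR_nonneg _ _ _)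
    refine H.trans ?_
    rw [sum_cons, Fin.prod_univ_succ]
    simp only [RR_succ]
    push_cast
    refine mul_le_mul_of_nonneg_left ?_ (Real.rpow_nonneg (Finset.sum_nonneg fun s _ => hP0 s) _)
    refine mul_le_mul_of_nonneg_right ?_ (Finset.prod_nonneg fun k _ =>
      Real.rpow_nonneg (Finset.sum_nonneg fun s _ => RR_nonneg _ _ _) _)
    have M := mink_fin (2 / p) ((one_le_div hp).2 hp2) (fun (j : Fin m → Fin N) s =>
      a (Fin.cons s j) ^ p) (fun j s => Real.rpow_nonneg (ha _) _)
    have e : ∀ s (j : Fin m → Fin N), (a (Fin.cons s j) ^ p) ^ (2 / p) = a (Fin.cons s j) ^ 2 := by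
      intro s j
      rw [← Real.rpow_mul (ha _), mul_div_cancel₀ _ hp.ne']
      norm_cast
    simp only [e, one_div_div] at M
    rw [← RR_zero hN] at M
    have h0 : 0 ≤ ∑ s, P s ^ (2 / p) := Finset.sum_nonneg fun s _ => Real.rpow_nonneg (hP0 s) _
    calc (∑ s, P s ^ (2 / p)) ^ (θ * q / 2) = ((∑ s, P s ^ (2 / p)) ^ (p / 2)) ^ (θ * q / p) := by
          rw [← Real.rpow_mul h0]; congr 1; field_simp
      _ ≤ _ := Real.rpow_le_rpow (Real.rpow_nonneg h0 _) M (by positivity)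

open MeasureTheory ProbabilityTheory

theorem f_le {x y : ℝ} (h : |y| ≤ |x|) :
    |x + y| ^ 3 + |x - y| ^ 3 = 2 * |x| ^ 3 + 6 * |x| * |y| ^ 2 := by
  rcases abs_cases x with ⟨hx, _⟩ | ⟨hx, _⟩ <;> rcases abs_cases y with ⟨hy, _⟩ | ⟨hy, _⟩ <;>
  rw [hx, hy] at h ⊢
  · rw [abs_of_nonneg (by linarith), abs_of_nonneg (by linarith)]; ring
  · rw [abs_of_nonneg (by linarith), abs_of_nonneg (by linarith)]; ring
  · rw [abs_of_nonpos (by linarith), abs_of_nonpos (by linarith)]; ring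
  · rw [abs_of_nonpos (by linarith), abs_of_nonpos (by linarith)]; ring

theorem f_ge {x y : ℝ} (h : |x| ≤ |y|) :
    |x + y| ^ 3 + |x - y| ^ 3 = 2 * |y| ^ 3 + 6 * |y| * |x| ^ 2 := by
  rw [← f_le h, add_comm x y, abs_sub_comm x y]

theorem key_tangent (x a : ℝ) : ∃ c : ℝ, ∀ y,
    |x + a| ^ 3 + |x - a| ^ 3 + c * (y ^ 2 - a ^ 2) ≤ |x + y| ^ 3 + |x - y| ^ 3 := by
  by_cases ha : |a| ≤ |x|
  · refine ⟨6 * |x|, fun y => ?_⟩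
    rw [f_le ha, ← sq_abs y, ← sq_abs a]
    rcases le_total (|y|) (|x|) with h | h
    · rw [f_le h]; linarith
    · rw [f_ge h]
      have : 0 ≤ (|y| - |x|) ^ 3 := pow_nonneg (by linarith) 3
      nlinarith
  · push Not at ha
    have ha0 : 0 < |a| := lt_of_le_of_lt (abs_nonneg x) ha
    refine ⟨3 * |a| + 3 * |x| ^ 2 / |a|, fun y => ?_⟩
    rw [f_ge ha.le, ← sq_abs y, ← sq_abs a]
    have hx0 := abs_nonneg x
    have hy0 := abs_nonneg y
    generalize |a| = A at *
    rcases le_total (|y|) (|x|) with h | h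
    · rw [f_le h]
      generalize |x| = X at *
      generalize |y| = Y at *
      have : 2 * X ^ 3 + 6 * X * Y ^ 2 - (2 * A ^ 3 + 6 * A * X ^ 2
          + (3 * A + 3 * X ^ 2 / A) * (Y ^ 2 - A ^ 2))
          = (3 * (A - X) ^ 2 * (X ^ 2 - Y ^ 2) + (X - A) ^ 2 * (A * (2 * X + A) - 3 * X ^ 2)) / A := by
        field_simp
        ring
      have h2 : 0 ≤ X ^ 2 - Y ^ 2 := by nlinarith
      have h3 : 0 ≤ A * (2 * X + A) - 3 * X ^ 2 := by nlinarith
      have : 0 ≤ (3 * (A - X) ^ 2 * (X ^ 2 - Y ^ 2)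
        + (X - A) ^ 2 * (A * (2 * X + A) - 3 * X ^ 2)) / A := by positivity
      linarith
    · rw [f_ge h]
      generalize |x| = X at *
      generalize |y| = Y at *
      have : 2 * Y ^ 3 + 6 * Y * X ^ 2 - (2 * A ^ 3 + 6 * A * X ^ 2
          + (3 * A + 3 * X ^ 2 / A) * (Y ^ 2 - A ^ 2))
          = ((Y - A) ^ 2 * (A * (2 * Y + A) - 3 * X ^ 2)) / A := by
        field_simp
        ring
      have h3 : 0 ≤ A * (2 * Y + A) - 3 * X ^ 2 := by nlinarith
      have : 0 ≤ ((Y - A) ^ 2 * (A * (2 * Y + A) - 3 * X ^ 2)) / A := by positivity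
      linarith

theorem int_cube (m : ℝ) (v : NNReal) (x : ℝ) : Integrable (fun y => |x + y| ^ 3) (gaussianReal m v) := by
  have h : MemLp (fun y : ℝ => x + y) 3 (gaussianReal m v) :=
    (memLp_const x).add (memLp_id_gaussianReal' 3 (by simp))
  simpa using h.integrable_norm_pow (p := 3) (by simp)

theorem int_cube' (m : ℝ) (v : NNReal) (x : ℝ) : Integrable (fun y => |x - y| ^ 3) (gaussianReal m v) := by
  have h : MemLp (fun y : ℝ => x - y) 3 (gaussianReal m v) :=
    (memLp_const x).sub (memLp_id_gaussianReal' 3 (by simp))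
  simpa using h.integrable_norm_pow (p := 3) (by simp)

theorem int_sq (m : ℝ) (v : NNReal) : Integrable (fun y => y ^ 2) (gaussianReal m v) :=
  (memLp_id_gaussianReal' 2 (by simp)).integrable_sq

theorem mom_two (v : NNReal) : ∫ y, y ^ 2 ∂(gaussianReal 0 v) = v := by
  have h := variance_fun_id_gaussianReal (μ := 0) (v := v)
  rw [variance_eq_integral (by fun_prop)] at h
  simpa using h

theorem neg_cube (v : NNReal) (x : ℝ) :
    ∫ y, |x - y| ^ 3 ∂(gaussianReal 0 v) = ∫ y, |x + y| ^ 3 ∂(gaussianReal 0 v) := by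
  have h := gaussianReal_map_neg (μ := 0) (v := v)
  rw [neg_zero] at h
  conv_rhs => rw [← h]
  rw [integral_map (by fun_prop) (by fun_prop)]
  simp [sub_eq_add_neg]

theorem two_pt (x a : ℝ) : |x + a| ^ 3 + |x - a| ^ 3
    ≤ 2 * ∫ y, |x + y| ^ 3 ∂(gaussianReal 0 (a ^ 2).toNNReal) := by
  obtain ⟨c, hc⟩ := key_tangent x a
  set v := (a ^ 2).toNNReal
  have hv : (v : ℝ) = a ^ 2 := Real.coe_toNNReal _ (sq_nonneg a)
  have h := integral_mono (μ := gaussianReal 0 v)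
    (((integrable_const _)).add (((int_sq 0 v).sub (integrable_const _)).const_mul c))
    ((int_cube 0 v x).add (int_cube' 0 v x)) hc
  simp only [Pi.add_apply, Pi.sub_apply] at h
  have hi : Integrable (fun y : ℝ => c * (y ^ 2 - a ^ 2)) (gaussianReal 0 v) :=
    ((int_sq 0 v).sub (integrable_const _)).const_mul c
  rw [integral_add (integrable_const _) hi,
    integral_const_mul, integral_sub (int_sq 0 v) (integrable_const _), mom_two, hv,
    integral_add (int_cube 0 v x) (int_cube' 0 v x), neg_cube] at h
  simp at h
  linarith

theorem conv_cube (v w : NNReal) (x : ℝ) :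
    ∫ y, (∫ z, |x + y + z| ^ 3 ∂(gaussianReal 0 w)) ∂(gaussianReal 0 v)
      = ∫ y, |x + y| ^ 3 ∂(gaussianReal 0 (v + w)) := by
  have h := gaussianReal_conv_gaussianReal (m₁ := 0) (m₂ := 0) (v₁ := v) (v₂ := w)
  rw [add_zero] at h
  have hi := int_cube 0 (v + w) x
  rw [← h] at hi ⊢
  rw [integral_conv hi]
  simp [add_assoc]

theorem conv_int (v w : NNReal) (x : ℝ) :
    Integrable (fun y => ∫ z, |x + y + z| ^ 3 ∂(gaussianReal 0 w)) (gaussianReal 0 v) := by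
  have h := gaussianReal_conv_gaussianReal (m₁ := 0) (m₂ := 0) (v₁ := v) (v₂ := w)
  rw [add_zero] at h
  have hi := int_cube 0 (v + w) x
  rw [← h, integrable_conv_iff (by fun_prop)] at hi
  simpa [add_assoc] using hi.2

def sg (b : Bool) : ℝ := cond b 1 (-1)

theorem sum_cons_bool {N : ℕ} (f : (Fin (N+1) → Bool) → ℝ) :
    ∑ i, f i = (∑ j : Fin N → Bool, f (Fin.cons true j)) + ∑ j : Fin N → Bool, f (Fin.cons false j) := by
  rw [← (Fin.consEquiv (fun _ => Bool)).sum_comp, Fintype.sum_prod_type]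
  simp [Fin.consEquiv]

theorem khin3 : ∀ (N : ℕ) (a : Fin N → ℝ) (x : ℝ),
    ∑ ε : Fin N → Bool, |x + ∑ t, a t * sg (ε t)| ^ 3
      ≤ 2 ^ N * ∫ y, |x + y| ^ 3 ∂(gaussianReal 0 (∑ t, a t ^ 2).toNNReal) := by
  intro N
  induction N with
  | zero => intro a x; simp
  | succ N ih =>
    intro a x
    rw [sum_cons_bool]
    simp only [Fin.sum_univ_succ, Fin.cons_zero, Fin.cons_succ, ← add_assoc]
    have h1 := ih (fun t => a t.succ) (x + a 0 * sg true)
    have h2 := ih (fun t => a t.succ) (x + a 0 * sg false)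
    refine (add_le_add h1 h2).trans ?_
    rw [add_comm (a 0 ^ 2), Real.toNNReal_add (Finset.sum_nonneg fun t _ => sq_nonneg _) (sq_nonneg _),
      ← conv_cube, ← mul_add, pow_succ, mul_assoc]
    gcongr
    simp only [sg, Bool.cond_true, Bool.cond_false, mul_one, mul_neg]
    set v := (∑ t : Fin N, a t.succ ^ 2).toNNReal
    rw [← integral_add (int_cube _ _ _) (int_cube _ _ _), ← integral_const_mul]
    refine integral_mono ((int_cube _ _ _).add (int_cube _ _ _)) ((conv_int _ _ _).const_mul 2) ?_
    intro y
    have := two_pt (x + y) (a 0)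
    rw [add_right_comm x y, add_sub_right_comm x y, sub_eq_add_neg x] at this
    simp only [Pi.add_apply]
    linarith

theorem khin2 : ∀ (N : ℕ) (a : Fin N → ℝ) (x : ℝ),
    ∑ ε : Fin N → Bool, (x + ∑ t, a t * sg (ε t)) ^ 2 = 2 ^ N * (x ^ 2 + ∑ t, a t ^ 2) := by
  intro N
  induction N with
  | zero => intro a x; simp
  | succ N ih =>
    intro a x
    rw [sum_cons_bool]
    simp only [Fin.sum_univ_succ, Fin.cons_zero, Fin.cons_succ, ← add_assoc]
    rw [ih (fun t => a t.succ), ih (fun t => a t.succ)]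
    simp only [sg, Bool.cond_true, Bool.cond_false]
    ring

theorem mom_three (v : NNReal) : ∫ y, |y| ^ 3 ∂(gaussianReal 0 v) ≤ 8 / 5 * (v : ℝ) ^ ((3:ℝ)/2) := by
  by_cases hv : v = 0
  · subst hv; simp
  have hv0 : (0:ℝ) < v := lt_of_le_of_ne v.2 (by exact_mod_cast (Ne.symm hv))
  rw [integral_gaussianReal_eq_integral_smul hv]
  have e : ∀ y : ℝ, gaussianPDFReal 0 v y • |y| ^ 3
      = (√(2 * π * v))⁻¹ * (fun z : ℝ => z ^ 3 * rexp (-(1 / (2 * v)) * z ^ (2:ℝ))) |y| := by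
    intro y
    simp [gaussianPDFReal]
    ring_nf
  simp only [e]
  rw [integral_const_mul, integral_comp_abs (f := fun z : ℝ => z ^ 3 * rexp (-(1 / (2 * v)) * z ^ (2:ℝ)))]
  have h := integral_rpow_mul_exp_neg_mul_rpow (p := 2) (q := 3) (b := 1 / (2 * v)) (by norm_num) (by norm_num)
    (by positivity)
  have e2 : ∀ x : ℝ, x ^ (3:ℝ) = x ^ 3 := fun x => by norm_cast
  simp only [e2] at h
  rw [h]
  have g : Gamma ((3 + 1) / 2) = 1 := by norm_num
  rw [g]
  have e3 : (1 / (2 * (v:ℝ))) ^ (-(3 + 1) / 2 : ℝ) = (2 * v) ^ 2 := by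
    rw [show (-(3 + 1) / 2 : ℝ) = -2 by norm_num, Real.rpow_neg (by positivity), one_div,
      Real.inv_rpow (by positivity), inv_inv]
    norm_cast
  rw [e3]
  have e4 : (v:ℝ) ^ ((3:ℝ)/2) = √v * v := by
    rw [show (3:ℝ)/2 = 1/2 + 1 by norm_num, Real.rpow_add hv0, Real.sqrt_eq_rpow, Real.rpow_one]
  rw [e4, Real.sqrt_mul (by positivity)]
  have h5 : (5:ℝ)/2 ≤ √(2 * π) := by
    apply Real.le_sqrt_of_sq_le
    have := Real.pi_gt_d2
    norm_num at this ⊢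
    linarith
  have hs : 0 < √(v:ℝ) := Real.sqrt_pos.2 hv0
  have hs2 : √(v:ℝ) * √(v:ℝ) = v := Real.mul_self_sqrt hv0.le
  rw [inv_mul_le_iff₀ (by positivity)]
  have : √(2 * π) * √v * (8 / 5 * (√v * v)) = √(2 * π) * (8/5 * v * v) := by
    linear_combination √(2 * π) * (8 / 5) * v * hs2
  rw [this]
  have h6 : 0 ≤ 8/5 * (v:ℝ) * v := by positivity
  nlinarith

theorem khin_p {N : ℕ} (p : ℝ) (hp : 0 < p) (hp2 : p ≤ 2) (a : Fin N → ℝ) :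
    2 ^ N * (∑ t, a t ^ 2) ^ (p / 2)
      ≤ (8 / 5) ^ (2 - p) * ∑ ε : Fin N → Bool, |∑ t, a t * sg (ε t)| ^ p := by
  set s := ∑ t, a t ^ 2 with hs
  have hs0 : 0 ≤ s := Finset.sum_nonneg fun t _ => sq_nonneg _
  rcases hs0.eq_or_lt with h0 | hs0'
  · rw [← h0, Real.zero_rpow (by positivity), mul_zero]; positivity
  have h2 := khin2 N a 0
  have h3 := khin3 N a 0
  simp only [zero_add] at h2 h3
  have h3' := h3.trans (mul_le_mul_of_nonneg_left (mom_three _) (by positivity))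
  rw [Real.coe_toNNReal _ hs0] at h3'
  have h3p : (0:ℝ) < 3 - p := by linarith
  have H := holder_fin (ι := Fin N → Bool) (κ := Fin 2) ![1 / (3 - p), (2 - p) / (3 - p)]
    (by intro j; fin_cases j <;> simp <;> [linarith; exact div_nonneg (by linarith) h3p.le])
    (by simp; field_simp; ring)
    ![fun ε => |∑ t, a t * sg (ε t)| ^ p, fun ε => |∑ t, a t * sg (ε t)| ^ 3]
    (by intro j i; fin_cases j <;> simp <;> positivity)
  simp only [Fin.prod_univ_two, Matrix.cons_val_zero, Matrix.cons_val_one] at H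
  have e : ∀ x : ℝ, (|x| ^ p) ^ (1 / (3 - p)) * (|x| ^ 3) ^ ((2 - p) / (3 - p)) = x ^ 2 := by
    intro x
    rw [← Real.rpow_natCast (|x|) 3, ← Real.rpow_mul (abs_nonneg x), ← Real.rpow_mul (abs_nonneg x),
      ← Real.rpow_add_of_nonneg (abs_nonneg x) (by positivity)
      (mul_nonneg (by norm_num) (div_nonneg (by linarith) h3p.le)), ← sq_abs x,
      ← Real.rpow_natCast (|x|) 2]
    congr 1
    push_cast
    field_simp
    ring
  simp only [e] at H
  set X := ∑ ε : Fin N → Bool, |∑ t, a t * sg (ε t)| ^ p with hX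
  set Y := ∑ ε : Fin N → Bool, |∑ t, a t * sg (ε t)| ^ 3 with hY
  have hX0 : 0 ≤ X := Finset.sum_nonneg fun _ _ => Real.rpow_nonneg (abs_nonneg _) _
  have hY0 : 0 ≤ Y := Finset.sum_nonneg fun _ _ => pow_nonneg (abs_nonneg _) _
  rw [h2] at H
  simp only [ne_eq, OfNat.ofNat_ne_zero, not_false_eq_true, zero_pow, zero_add, ← hs] at H
  have H2 := Real.rpow_le_rpow (by positivity) H h3p.le
  rw [Real.mul_rpow (x := X ^ _) (by positivity) (by positivity), ← Real.rpow_mul hX0, ← Real.rpow_mul hY0,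
    div_mul_cancel₀ _ h3p.ne', div_mul_cancel₀ _ h3p.ne', Real.rpow_one] at H2
  have H3 := H2.trans (mul_le_mul_of_nonneg_left
    (Real.rpow_le_rpow hY0 h3' (by linarith : 0 ≤ 2 - p)) hX0)
  have hT : (0:ℝ) < 2 ^ N := by positivity
  generalize (2:ℝ) ^ N = T at *
  rw [Real.mul_rpow hT.le hs0, Real.mul_rpow hT.le (by positivity),
    Real.mul_rpow (by norm_num) (by positivity), ← Real.rpow_mul hs0,
    show (3 - p) = 1 + (2 - p) by ring, Real.rpow_add hT, Real.rpow_one, Real.rpow_add hs0',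
    Real.rpow_one] at H3
  have hs' : s * s ^ (2 - p) = s ^ (p / 2) * s ^ (3 / 2 * (2 - p)) := by
    rw [← Real.rpow_add hs0', ← Real.rpow_one_add' hs0 (by linarith)]
    congr 1; ring
  rw [hs'] at H3
  have hc : 0 < T ^ (2 - p) * s ^ (3 / 2 * (2 - p)) := by positivity
  refine le_of_mul_le_mul_right ?_ hc
  linarith

def BH (n N : ℕ) (C : ℝ) : Prop := ∀ (a : (Fin n → Fin N) → ℝ) (K : ℝ), 0 ≤ K →
  (∀ z : Fin n → Fin N → ℝ, (∀ k t, |z k t| ≤ 1) → |∑ i, a i * ∏ k, z k (i k)| ≤ K) →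
  ∑ i, |a i| ^ ((2 * n : ℝ) / (n + 1)) ≤ (C * K) ^ ((2 * n : ℝ) / (n + 1))

theorem BH_one (N : ℕ) : BH 1 N 1 := by
  intro a K hK h
  have := h (fun _ t => SignType.sign (a (fun _ => t))) (by
    intro k t
    rcases lt_trichotomy (a fun _ => t) 0 with h | h | h <;> simp [h])
  norm_num
  refine le_trans (Finset.sum_le_sum fun i _ => ?_) ((le_abs_self _).trans this)
  rw [Fin.prod_univ_one]
  have e : (fun _ => i 0) = i := by ext k; rw [Subsingleton.elim k 0]
  rw [e, mul_comm, sign_mul_self]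

theorem RR_insertNth {m N : ℕ} (hN : 0 < N) (p : ℝ) (a : (Fin (m+1) → Fin N) → ℝ) (k : Fin (m+1)) :
    RR p a k = ∑ j : Fin m → Fin N, (∑ t, a (k.insertNth t j) ^ 2) ^ (p / 2) := by
  unfold RR
  rw [← (Fin.insertNthEquiv (fun _ => Fin N) k).sum_comp, Fintype.sum_prod_type]
  have : (N:ℝ) ≠ 0 := by positivity
  simp [Fin.insertNthEquiv]
  field_simp

theorem BH_succ {n N : ℕ} (hN : 0 < N) (hn : 1 ≤ n) (C : ℝ) (hC : 0 ≤ C) (h : BH n N C) :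
    BH (n + 1) N (C * (8 / 5) ^ (1 / (n : ℝ))) := by
  intro a K hK ha
  have hn' : (0:ℝ) < n := by positivity
  set p : ℝ := (2 * n : ℝ) / (n + 1) with hp
  have hp0 : 0 < p := by positivity
  have hp2 : p ≤ 2 := by rw [hp, div_le_iff₀ (by positivity)]; linarith
  have h2p : 2 - p = 2 / (n + 1) := by rw [hp]; field_simp; ring
  set M : ℝ := 8 / 5 with hM
  have hM0 : 0 < M := by norm_num [hM]
  have hR : ∀ k, RR p (fun i => |a i|) k ≤ M ^ (2 - p) * (C * K) ^ p := by
    intro k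
    rw [RR_insertNth hN]
    simp only [sq_abs]
    have hT : (0:ℝ) < 2 ^ N := by positivity
    refine le_of_mul_le_mul_left ?_ hT
    rw [Finset.mul_sum]
    refine (Finset.sum_le_sum fun j _ => khin_p p hp0 hp2 (fun t => a (k.insertNth t j))).trans ?_
    rw [← Finset.mul_sum, Finset.sum_comm, mul_left_comm]
    refine mul_le_mul_of_nonneg_left ?_ (by positivity)
    have hE : ∀ ε : Fin N → Bool, ∑ j : Fin n → Fin N, |∑ t, a (k.insertNth t j) * sg (ε t)| ^ p
        ≤ (C * K) ^ p := by
      intro ε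
      refine h (fun j => ∑ t, a (k.insertNth t j) * sg (ε t)) K hK fun z hz => ?_
      have hz' := ha (k.insertNth (fun t => sg (ε t)) z) (by
        intro l t
        refine Fin.succAboveCases k ?_ (fun l => ?_) l
        · rw [Fin.insertNth_apply_same]; cases ε t <;> simp [sg]
        · rw [Fin.insertNth_apply_succAbove]; exact hz l t)
      refine le_of_eq_of_le (congrArg _ ?_) hz'
      rw [← (Fin.insertNthEquiv (fun _ => Fin N) k).sum_comp, Fintype.sum_prod_type,
        Finset.sum_comm]
      refine Finset.sum_congr rfl fun j _ => ?_
      rw [Finset.sum_mul]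
      refine Finset.sum_congr rfl fun t _ => ?_
      rw [Fin.prod_univ_succAbove _ k]
      simp [Fin.insertNthEquiv, mul_assoc]
    refine (Finset.sum_le_sum fun ε _ => hE ε).trans (le_of_eq ?_)
    simp
  set q : ℝ := (2 * ((n + 1 : ℕ) : ℝ)) / ((n + 1 : ℕ) + 1) with hq
  have hq0 : 0 < q := by positivity
  have B := blei hN p (1 / (n + 1)) q hp0 hp2 (by positivity) hq0
    (by rw [hq, hp]; push_cast; field_simp; ring) (n + 1) (by push_cast; field_simp; rfl)
    (fun i => |a i|) (fun i => abs_nonneg _)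
  refine B.trans ?_
  have e0 : (1 - ((n + 1 : ℕ) : ℝ) * (1 / (n + 1))) * q / p = 0 := by
    push_cast; field_simp; simp
  rw [e0, Real.rpow_zero, one_mul]
  have hCK : 0 ≤ C * K := by positivity
  refine (Finset.prod_le_prod (fun k _ => Real.rpow_nonneg (RR_nonneg _ _ _) _)
    (fun k _ => Real.rpow_le_rpow (RR_nonneg _ _ _) (hR k) (by positivity))).trans (le_of_eq ?_)
  rw [Finset.prod_const, Finset.card_univ, Fintype.card_fin, ← Real.rpow_natCast,
    ← Real.rpow_mul (by positivity), Real.mul_rpow (by positivity) (by positivity),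
    ← Real.rpow_mul hM0.le, ← Real.rpow_mul hCK, mul_right_comm C, Real.mul_rpow hCK (by positivity),
    ← Real.rpow_mul hM0.le, mul_comm]
  congr 2
  · push_cast; field_simp
  · rw [h2p, hp]; push_cast; field_simp

theorem BH_all {N : ℕ} (hN : 0 < N) : ∀ n : ℕ, BH (n + 1) N ((8 / 5) ^ ((harmonic n : ℚ) : ℝ)) := by
  intro n
  induction n with
  | zero => simpa using BH_one N
  | succ n ih =>
    have := BH_succ hN (by omega) _ (by positivity) ih
    rw [← Real.rpow_add (by norm_num)] at this
    rw [harmonic_succ]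
    push_cast at this ⊢
    simpa using this

theorem numer : ∀ m : ℕ, 64 ≤ m →
    ((8 / 5 : ℝ)) ^ ((harmonic m : ℚ) : ℝ) ≤ 1.310883 * (m : ℝ) ^ (0.526322 : ℝ) := by
  intro m hm
  induction m, hm using Nat.le_induction with
  | base =>
    have h1 : harmonic 64 ≤ 19 / 4 := by
      simp only [harmonic, Finset.sum_range_succ, Finset.sum_range_zero]
      norm_num
    have h1' : ((harmonic 64 : ℚ) : ℝ) ≤ 19 / 4 := by
      have := (Rat.cast_le (K := ℝ)).2 h1
      push_cast at this
      exact this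
    have h2 : (8 / 5 : ℝ) ^ ((harmonic 64 : ℚ) : ℝ) ≤ (8 / 5 : ℝ) ^ (19 / 4 : ℝ) :=
      Real.rpow_le_rpow_of_exponent_le (by norm_num) h1'
    have h3 : (8 / 5 : ℝ) ^ (19 / 4 : ℝ) ≤ 10.4 := by
      rw [show (19 / 4 : ℝ) = ((19 : ℕ) : ℝ) * (1 / 4) by norm_num, Real.rpow_mul (by norm_num),
        Real.rpow_natCast]
      have : (10.4 : ℝ) = (10.4 ^ (4:ℕ)) ^ (1 / 4 : ℝ) := by
        rw [← Real.rpow_natCast, ← Real.rpow_mul (by norm_num)]; norm_num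
      rw [this]
      exact Real.rpow_le_rpow (by norm_num) (by norm_num) (by norm_num)
    have h4 : (8:ℝ) ≤ ((64 : ℕ) : ℝ) ^ (0.526322 : ℝ) := by
      calc (8:ℝ) = ((64:ℕ) : ℝ) ^ (1 / 2 : ℝ) := by
            rw [← Real.sqrt_eq_rpow, show (((64:ℕ)) : ℝ) = 8 ^ 2 by norm_num,
              Real.sqrt_sq (by norm_num)]
        _ ≤ _ := Real.rpow_le_rpow_of_exponent_le (by norm_num) (by norm_num)
    linarith
  | succ m hm ih =>
    have hm0 : (0:ℝ) < m := by positivity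
    have hb : (8 / 5 : ℝ) ^ (((m:ℝ) + 1)⁻¹) ≤ (((m:ℝ) + 1) / m) ^ (0.526322 : ℝ) := by
      have e1 : (8 / 5 : ℝ) ≤ rexp (1 / 2) := by
        have := Real.quadratic_le_exp_of_nonneg (x := 1 / 2) (by norm_num)
        norm_num at this ⊢
        linarith
      have e2 : rexp (((m:ℝ) + 1)⁻¹) ≤ ((m:ℝ) + 1) / m := by
        have h := Real.add_one_le_exp (-((m:ℝ) + 1)⁻¹)
        rw [Real.exp_neg] at h
        have h' : -((m:ℝ) + 1)⁻¹ + 1 = (((m:ℝ) + 1) / m)⁻¹ := by field_simp; ring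
        rw [h'] at h
        exact (inv_le_inv₀ (by positivity) (Real.exp_pos _)).1 h
      calc (8 / 5 : ℝ) ^ (((m:ℝ) + 1)⁻¹) ≤ (rexp (1 / 2)) ^ (((m:ℝ) + 1)⁻¹) :=
            Real.rpow_le_rpow (by norm_num) e1 (by positivity)
        _ = (rexp (((m:ℝ) + 1)⁻¹)) ^ (1 / 2 : ℝ) := by
            rw [← Real.exp_mul, ← Real.exp_mul, mul_comm]
        _ ≤ (((m:ℝ) + 1) / m) ^ (1 / 2 : ℝ) := Real.rpow_le_rpow (Real.exp_pos _).le e2 (by norm_num)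
        _ ≤ _ := Real.rpow_le_rpow_of_exponent_le
            ((one_le_div hm0).2 (by linarith)) (by norm_num)
    rw [harmonic_succ]
    push_cast
    rw [Real.rpow_add (by norm_num)]
    have e3 : ((m:ℝ) + 1) ^ (0.526322 : ℝ)
        = (m:ℝ) ^ (0.526322 : ℝ) * (((m:ℝ) + 1) / m) ^ (0.526322 : ℝ) := by
      rw [← Real.mul_rpow (by positivity) (by positivity), mul_div_cancel₀ _ hm0.ne']
    rw [e3, ← mul_assoc]
    exact mul_le_mul ih hb (by positivity) (by positivity)

theorem stmt6 (n : ℕ) (hn : 2 ^ 6 < n) (N : ℕ) (hN : 0 < N)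
    (U : ContinuousMultilinearMap ℝ (fun _ : Fin n => (Fin N → ℝ)) ℝ) :
    BHreal n N U ≤ 1.310883 * ((n : ℝ) - 1) ^ (0.526322 : ℝ) * ‖U‖ := by
  obtain ⟨m, rfl⟩ : ∃ m, n = m + 1 := ⟨n - 1, by omega⟩
  have hm : 64 ≤ m := by norm_num at hn; omega
  have hb := BH_all hN m (fun i => U (fun k => Pi.single (i k) (1 : ℝ))) ‖U‖ (norm_nonneg _) (by
    intro z hz
    have e : U z = ∑ i : Fin (m + 1) → Fin N,
        U (fun k => Pi.single (i k) (1 : ℝ)) * ∏ k, z k (i k) := by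
      have hz' : z = fun k => ∑ t, z k t • (Pi.single t (1 : ℝ) : Fin N → ℝ) := by
        funext k
        exact pi_eq_sum_univ' (z k)
      conv_lhs => rw [hz', U.map_sum]
      refine Finset.sum_congr rfl fun i _ => ?_
      rw [U.map_smul_univ (fun k => z k (i k)) (fun k => Pi.single (i k) (1 : ℝ)), smul_eq_mul,
        mul_comm]
    rw [← e, ← Real.norm_eq_abs]
    refine (U.le_opNorm z).trans ?_
    refine mul_le_of_le_one_right (norm_nonneg _) (Finset.prod_le_one (fun _ _ => norm_nonneg _) ?_)
    intro k _
    exact (pi_norm_le_iff_of_nonneg zero_le_one).2 fun t => hz k t)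
  have hnum := numer m hm
  unfold BHreal
  have h1 := Real.rpow_le_rpow (Finset.sum_nonneg fun i _ => Real.rpow_nonneg (abs_nonneg _) _) hb
    (z := (((m + 1 : ℕ) : ℝ) + 1) / (2 * ((m + 1 : ℕ) : ℝ))) (by positivity)
  refine h1.trans ?_
  rw [← Real.rpow_mul (by positivity)]
  have e : (2 * ((m + 1 : ℕ) : ℝ)) / (((m + 1 : ℕ) : ℝ) + 1)
      * ((((m + 1 : ℕ) : ℝ) + 1) / (2 * ((m + 1 : ℕ) : ℝ))) = 1 := by
    push_cast; field_simp
  rw [e, Real.rpow_one]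
  push_cast
  rw [add_sub_cancel_right]
  exact mul_le_mul_of_nonneg_right hnum (norm_nonneg _)
end

section
/- For every integer n > 2^8 = 256, every positive integer N, and every n-linear form U : (ℝ^N)^n → ℝ, one has (∑_{i₁,…,iₙ=1}^N |U(e_{i₁},…,e_{iₙ})|^{2n/(n+1)})^{(n+1)/(2n)} ≤ 1.303787 · (n-1)^{0.526322} · ‖U‖. -/
open Real

def bhRm {N k : ℕ} (j : Fin (k + 1)) (i : Fin (k + 1) → Fin N) : Fin k → Fin N :=
  fun l => i (j.succAbove l)

def bhIns {N k : ℕ} (j : Fin (k + 1)) (x : Fin N) (y : Fin k → Fin N) : Fin (k + 1) → Fin N :=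
  Fin.insertNth (α := fun _ => Fin N) j x y

def bhCons {N k : ℕ} (x : Fin N) (y : Fin k → Fin N) : Fin (k + 1) → Fin N :=
  Fin.cons (α := fun _ => Fin N) x y

theorem bhRm_ins {N k : ℕ} (j : Fin (k + 1)) (x : Fin N) (y : Fin k → Fin N) :
    bhRm j (bhIns j x y) = y := by
  funext l; simp [bhRm, bhIns]

theorem bhIns_self {N k : ℕ} (j : Fin (k + 1)) (i : Fin (k + 1) → Fin N) :
    bhIns j (i j) (bhRm j i) = i :=
  Fin.insertNth_self_removeNth (α := fun _ => Fin N) j i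

theorem bhRm_zero_cons {N k : ℕ} (x : Fin N) (y : Fin k → Fin N) :
    bhRm 0 (bhCons x y) = y := by
  funext l; simp [bhRm, bhCons]

theorem bhRm_succ_cons {N k : ℕ} (x : Fin N) (y : Fin (k + 1) → Fin N) (j : Fin (k + 1)) :
    bhRm j.succ (bhCons x y) = bhCons x (bhRm j y) := by
  funext l
  refine Fin.cases ?_ (fun l => ?_) l <;> simp [bhRm, bhCons]

theorem bh_sum_ins {N k : ℕ} (j : Fin (k + 1)) (f : (Fin (k + 1) → Fin N) → ℝ) :
    ∑ i, f i = ∑ x, ∑ y, f (bhIns j x y) := by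
  rw [← (Fin.insertNthEquiv (fun _ : Fin (k + 1) => Fin N) j).sum_comp, Fintype.sum_prod_type]
  rfl

theorem bh_sum_cons {N k : ℕ} (f : (Fin (k + 1) → Fin N) → ℝ) :
    ∑ i, f i = ∑ x, ∑ y, f (bhCons x y) := by
  rw [← (Fin.consEquiv (fun _ : Fin (k + 1) => Fin N)).sum_comp, Fintype.sum_prod_type]
  rfl

theorem bh_holder {α J : Type*} [Fintype α] [Fintype J] (g : J → α → ℝ)
    (hg : ∀ j x, 0 ≤ g j x) (w : J → ℝ) (hw : ∀ j, 0 < w j) (hs : ∑ j, w j = 1) :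
    ∑ x, ∏ j, g j x ^ w j ≤ ∏ j, (∑ x, g j x) ^ w j := by
  classical
  have hS : ∀ j, 0 ≤ ∑ x, g j x := fun j => Finset.sum_nonneg fun x _ => hg j x
  by_cases h0 : ∃ j, ∑ x, g j x = 0
  · obtain ⟨j, hj⟩ := h0
    have hz : ∀ x, g j x = 0 := fun x =>
      (Finset.sum_eq_zero_iff_of_nonneg (fun x _ => hg j x)).1 hj x (Finset.mem_univ x)
    have : ∀ x, ∏ j, g j x ^ w j = 0 := fun x =>
      Finset.prod_eq_zero (Finset.mem_univ j) (by rw [hz, Real.zero_rpow (hw j).ne'])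
    simp only [this, Finset.sum_const_zero]
    exact Finset.prod_nonneg fun j _ => Real.rpow_nonneg (hS j) _
  · push Not at h0
    have hpos : ∀ j, 0 < ∑ x, g j x := fun j => lt_of_le_of_ne (hS j) (h0 j).symm
    set P := ∏ j, (∑ x, g j x) ^ w j with hP
    have hPn : 0 ≤ P := Finset.prod_nonneg fun j _ => Real.rpow_nonneg (hS j) _
    have key : ∀ x, ∏ j, g j x ^ w j ≤ P * ∑ j, w j * (g j x / ∑ x, g j x) := by
      intro x
      have h1 : ∏ j, g j x ^ w j = P * ∏ j, (g j x / ∑ x, g j x) ^ w j := by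
        rw [hP, ← Finset.prod_mul_distrib]
        refine Finset.prod_congr rfl fun j _ => ?_
        rw [← Real.mul_rpow (hS j) (div_nonneg (hg j x) (hS j)), mul_div_cancel₀ _ (h0 j)]
      rw [h1]
      refine mul_le_mul_of_nonneg_left ?_ hPn
      exact Real.geom_mean_le_arith_mean_weighted _ _ _ (fun j _ => (hw j).le) hs
        (fun j _ => div_nonneg (hg j x) (hS j))
    refine (Finset.sum_le_sum fun x _ => key x).trans ?_
    rw [← Finset.mul_sum, Finset.sum_comm]
    have : ∀ j, ∑ x, w j * (g j x / ∑ x, g j x) = w j := by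
      intro j
      rw [← Finset.mul_sum, ← Finset.sum_div, div_self (h0 j), mul_one]
    simp only [this, hs, mul_one, le_refl]

theorem bh_holder2 {α : Type*} [Fintype α] (f g : α → ℝ)
    (hf : ∀ x, 0 ≤ f x) (hg : ∀ x, 0 ≤ g x) (s t : ℝ) (hs : 0 < s) (ht : 0 < t) (hst : s + t = 1) :
    ∑ x, f x ^ s * g x ^ t ≤ (∑ x, f x) ^ s * (∑ x, g x) ^ t := by
  have := bh_holder (α := α) (J := Fin 2) ![f, g] (by
    intro j x; fin_cases j
    · exact hf x
    · exact hg x) ![s, t] (by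
    intro j; fin_cases j
    · exact hs
    · exact ht) (by simpa [Fin.sum_univ_two] using hst)
  simpa [Fin.prod_univ_two] using this

theorem bh_LW (N : ℕ) (k : ℕ) : ∀ (F : Fin (k + 2) → (Fin (k + 1) → Fin N) → ℝ)
    (_ : ∀ j y, 0 ≤ F j y),
    ∑ i : Fin (k + 2) → Fin N, ∏ j, F j (bhRm j i) ^ (1 / ((k : ℝ) + 1)) ≤
      ∏ j, (∑ y, F j y) ^ (1 / ((k : ℝ) + 1)) := by
  induction k with
  | zero =>
    intro F hF
    apply le_of_eq
    rw [bh_sum_cons]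
    simp only [Fin.prod_univ_succ (n := 1), bhRm_zero_cons, bhRm_succ_cons]
    simp only [CharP.cast_eq_zero, zero_add, div_one, Real.rpow_one, Finset.univ_unique,
      Finset.prod_singleton]
    rw [Finset.sum_comm, Finset.sum_mul_sum]
    refine Finset.sum_congr rfl fun y _ => ?_
    rw [← Finset.mul_sum, ← Finset.mul_sum]
    congr 1
    rw [← (Equiv.funUnique (Fin 1) (Fin N)).symm.sum_comp]
    refine Finset.sum_congr rfl fun x _ => ?_
    congr 1
    ext j
    fin_cases j
    rfl
  | succ k ih =>
    intro F hF
    have hk : (0 : ℝ) < (k : ℝ) + 1 := by positivity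
    rw [bh_sum_cons]
    simp only [Fin.prod_univ_succ (n := k + 2), bhRm_zero_cons, bhRm_succ_cons]
    push_cast
    set e : ℝ := 1 / ((k : ℝ) + 1 + 1) with he
    have he0 : 0 < e := by positivity
    have hstep : ∀ x : Fin N,
        ∑ y : Fin (k + 2) → Fin N, F 0 y ^ e *
          ∏ j : Fin (k + 2), F j.succ (bhCons x (bhRm j y)) ^ e
        ≤ (∑ y, F 0 y) ^ e *
          ∏ j : Fin (k + 2), (∑ y : Fin (k + 1) → Fin N, F j.succ (bhCons x y)) ^ e := by
      intro x
      have h2 := bh_holder2 (fun y : Fin (k + 2) → Fin N => F 0 y)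
        (fun y => ∏ j : Fin (k + 2), F j.succ (bhCons x (bhRm j y)) ^ (1 / ((k : ℝ) + 1)))
        (fun y => hF _ _) (fun y => Finset.prod_nonneg fun j _ => Real.rpow_nonneg (hF _ _) _)
        e (((k : ℝ) + 1) * e) he0 (by positivity) (by rw [he]; field_simp; ring)
      have hexp : (1 / ((k : ℝ) + 1)) * (((k : ℝ) + 1) * e) = e := by field_simp
      have hpow : ∀ y : Fin (k + 2) → Fin N,
          (∏ j : Fin (k + 2), F j.succ (bhCons x (bhRm j y)) ^ (1 / ((k : ℝ) + 1)))
            ^ (((k : ℝ) + 1) * e) =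
          ∏ j : Fin (k + 2), F j.succ (bhCons x (bhRm j y)) ^ e := by
        intro y
        rw [← Real.finsetProd_rpow _ _ (fun j _ => Real.rpow_nonneg (hF _ _) _)]
        refine Finset.prod_congr rfl fun j _ => ?_
        rw [← Real.rpow_mul (hF _ _), hexp]
      simp only [hpow] at h2
      refine h2.trans ?_
      refine mul_le_mul_of_nonneg_left ?_
        (Real.rpow_nonneg (Finset.sum_nonneg fun y _ => hF _ _) _)
      have hi := ih (fun j y => F j.succ (bhCons x y)) (fun j y => hF _ _)
      have h3 := Real.rpow_le_rpow (Finset.sum_nonneg fun y _ =>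
        Finset.prod_nonneg fun j _ => Real.rpow_nonneg (hF _ _) _) hi
        (by positivity : 0 ≤ ((k : ℝ) + 1) * e)
      refine h3.trans (le_of_eq ?_)
      have hn : ∀ j : Fin (k + 2), 0 ≤ ∑ y : Fin (k + 1) → Fin N, F j.succ (bhCons x y) :=
        fun j => Finset.sum_nonneg fun y _ => hF _ _
      rw [← Real.finsetProd_rpow _ _ (fun j _ => Real.rpow_nonneg (hn j) _)]
      refine Finset.prod_congr rfl fun j _ => ?_
      rw [← Real.rpow_mul (hn j), hexp]
    refine (Finset.sum_le_sum fun x _ => hstep x).trans ?_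
    rw [← Finset.mul_sum]
    refine mul_le_mul_of_nonneg_left ?_
        (Real.rpow_nonneg (Finset.sum_nonneg fun y _ => hF _ _) _)
    have h4 := bh_holder (fun (j : Fin (k + 2)) (x : Fin N) =>
        ∑ y : Fin (k + 1) → Fin N, F j.succ (bhCons x y))
        (fun j x => Finset.sum_nonneg fun y _ => hF _ _) (fun _ => e) (fun _ => he0)
        (by simp [he]; field_simp; ring)
    refine h4.trans (le_of_eq ?_)
    refine Finset.prod_congr rfl fun j _ => ?_
    congr 1
    rw [bh_sum_cons]

/-- Blei type inequality. -/
theorem bh_blei (N k : ℕ) (a : (Fin (k + 2) → Fin N) → ℝ) (ha : ∀ i, 0 ≤ a i) (W : ℝ)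
    (hW : ∀ j : Fin (k + 2), ∑ y : Fin (k + 1) → Fin N,
      (∑ x, a (bhIns j x y) ^ 2) ^ (((k : ℝ) + 1) / (k + 2)) ≤ W) :
    ∑ i, a i ^ ((2 * ((k : ℝ) + 2)) / (k + 3)) ≤
      W ^ (((k : ℝ) + 2) ^ 2 / ((k + 3) * (k + 1))) := by
  set q : ℝ := ((k : ℝ) + 1) / (k + 2) with hq
  have hq0 : 0 < q := by positivity
  set D : Fin (k + 2) → (Fin (k + 1) → Fin N) → ℝ :=
    fun j y => ∑ x, a (bhIns j x y) ^ 2 with hD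
  have hD0 : ∀ j y, 0 ≤ D j y := fun j y => Finset.sum_nonneg fun x _ => sq_nonneg _
  have hWD : ∀ j, ∑ y, D j y ^ q ≤ W := hW
  have hS0 : ∀ j, 0 ≤ ∑ y, D j y ^ q := fun j =>
    Finset.sum_nonneg fun y _ => Real.rpow_nonneg (hD0 j y) _
  have hW0 : 0 ≤ W := (hS0 0).trans (hWD 0)
  -- the first family
  have hA : ∑ i, ∏ j, (a i ^ 2 * D j (bhRm j i) ^ (q - 1)) ^ (1 / ((k : ℝ) + 2)) ≤
      ∏ j, (∑ y, D j y ^ q) ^ (1 / ((k : ℝ) + 2)) := by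
    have h := bh_holder (fun (j : Fin (k + 2)) i => a i ^ 2 * D j (bhRm j i) ^ (q - 1))
      (fun j i => mul_nonneg (sq_nonneg _) (Real.rpow_nonneg (hD0 _ _) _))
      (fun _ => 1 / ((k : ℝ) + 2)) (fun _ => by positivity) (by simp; field_simp)
    refine h.trans (le_of_eq ?_)
    refine Finset.prod_congr rfl fun j _ => ?_
    congr 1
    rw [bh_sum_ins j, Finset.sum_comm]
    refine Finset.sum_congr rfl fun y _ => ?_
    simp only [bhRm_ins]
    rw [← Finset.sum_mul]
    change D j y * _ = _
    rcases (hD0 j y).eq_or_lt with h0 | h0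
    · rw [← h0, zero_mul, Real.zero_rpow hq0.ne']
    · rw [Real.rpow_sub_one h0.ne', mul_div_cancel₀ _ h0.ne']
  have hB := bh_LW N k (fun j y => D j y ^ q) (fun j y => Real.rpow_nonneg (hD0 j y) _)
  set s : ℝ := ((k : ℝ) + 2) / (k + 3) with hs
  set t : ℝ := 1 / ((k : ℝ) + 3) with ht
  have hs0 : 0 < s := by positivity
  have ht0 : 0 < t := by positivity
  set X := fun i => ∏ j, (a i ^ 2 * D j (bhRm j i) ^ (q - 1)) ^ (1 / ((k : ℝ) + 2)) with hX
  set Y := fun i => ∏ j, (D j (bhRm j i) ^ q) ^ (1 / ((k : ℝ) + 1)) with hY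
  have hX0 : ∀ i, 0 ≤ X i := fun i => Finset.prod_nonneg fun j _ =>
    Real.rpow_nonneg (mul_nonneg (sq_nonneg _) (Real.rpow_nonneg (hD0 _ _) _)) _
  have hY0 : ∀ i, 0 ≤ Y i := fun i => Finset.prod_nonneg fun j _ =>
    Real.rpow_nonneg (Real.rpow_nonneg (hD0 _ _) _) _
  have hpt : ∀ i, a i ^ ((2 * ((k : ℝ) + 2)) / (k + 3)) ≤ X i ^ s * Y i ^ t := by
    intro i
    rcases (ha i).eq_or_lt with h0 | h0
    · rw [← h0, Real.zero_rpow (by positivity)]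
      exact mul_nonneg (Real.rpow_nonneg (hX0 i) _) (Real.rpow_nonneg (hY0 i) _)
    · apply le_of_eq
      have hDp : ∀ j : Fin (k + 2), 0 < D j (bhRm j i) := by
        intro j
        refine Finset.sum_pos' (fun x _ => sq_nonneg _) ⟨i j, Finset.mem_univ _, ?_⟩
        rw [bhIns_self]
        positivity
      rw [hX, hY]
      simp only
      rw [← Real.finsetProd_rpow _ _ (fun j _ =>
          Real.rpow_nonneg (mul_nonneg (sq_nonneg _) (Real.rpow_nonneg (hD0 _ _) _)) _),
        ← Real.finsetProd_rpow _ _ (fun j _ => Real.rpow_nonneg (Real.rpow_nonneg (hD0 _ _) _) _),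
        ← Finset.prod_mul_distrib]
      have : ∀ j : Fin (k + 2),
          ((a i ^ 2 * D j (bhRm j i) ^ (q - 1)) ^ (1 / ((k : ℝ) + 2))) ^ s *
            ((D j (bhRm j i) ^ q) ^ (1 / ((k : ℝ) + 1))) ^ t = a i ^ (2 / ((k : ℝ) + 3)) := by
        intro j
        have hd := hDp j
        set d := D j (bhRm j i)
        rw [← Real.rpow_natCast (a i) 2, ← Real.rpow_mul (by positivity),
          Real.mul_rpow (by positivity) (by positivity), ← Real.rpow_mul h0.le,
          ← Real.rpow_mul hd.le, ← Real.rpow_mul hd.le, ← Real.rpow_mul hd.le,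
          mul_assoc, ← Real.rpow_add hd]
        have e1 : (q - 1) * (1 / ((k : ℝ) + 2) * s) + q * (1 / ((k : ℝ) + 1)) * t = 0 := by
          rw [hq, hs, ht]; field_simp; ring
        have e2 : ((2 : ℕ) : ℝ) * (1 / ((k : ℝ) + 2) * s) = 2 / ((k : ℝ) + 3) := by
          rw [hs]; push_cast; field_simp
        rw [e1, e2, Real.rpow_zero, mul_one]
      simp only [this, Finset.prod_const, Finset.card_univ, Fintype.card_fin]
      rw [← Real.rpow_natCast, ← Real.rpow_mul h0.le]
      congr 1
      push_cast
      ring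
  refine (Finset.sum_le_sum fun i _ => hpt i).trans ?_
  refine (bh_holder2 X Y hX0 hY0 s t hs0 ht0 (by rw [hs, ht]; field_simp; ring)).trans ?_
  have hXW : ∑ i, X i ≤ W := by
    refine hA.trans ?_
    have : ∏ j : Fin (k + 2), (∑ y, D j y ^ q) ^ (1 / ((k : ℝ) + 2)) ≤
        ∏ j : Fin (k + 2), W ^ (1 / ((k : ℝ) + 2)) :=
      Finset.prod_le_prod (fun j _ => Real.rpow_nonneg (hS0 j) _)
        (fun j _ => Real.rpow_le_rpow (hS0 j) (hWD j) (by positivity))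
    refine this.trans (le_of_eq ?_)
    simp only [Finset.prod_const, Finset.card_univ, Fintype.card_fin]
    rw [← Real.rpow_natCast, ← Real.rpow_mul hW0]
    push_cast
    rw [one_div_mul_cancel (by positivity), Real.rpow_one]
  have hYW : ∑ i, Y i ≤ W ^ (((k : ℝ) + 2) / (k + 1)) := by
    refine hB.trans ?_
    have : ∏ j : Fin (k + 2), (∑ y, D j y ^ q) ^ (1 / ((k : ℝ) + 1)) ≤
        ∏ j : Fin (k + 2), W ^ (1 / ((k : ℝ) + 1)) :=
      Finset.prod_le_prod (fun j _ => Real.rpow_nonneg (hS0 j) _)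
        (fun j _ => Real.rpow_le_rpow (hS0 j) (hWD j) (by positivity))
    refine this.trans (le_of_eq ?_)
    simp only [Finset.prod_const, Finset.card_univ, Fintype.card_fin]
    rw [← Real.rpow_natCast, ← Real.rpow_mul hW0]
    push_cast
    congr 1
    ring
  have hfin : W ^ s * (W ^ (((k : ℝ) + 2) / (k + 1))) ^ t =
      W ^ (((k : ℝ) + 2) ^ 2 / ((k + 3) * (k + 1))) := by
    rw [← Real.rpow_mul hW0, ← Real.rpow_add_of_nonneg hW0 hs0.le (by positivity)]
    congr 1
    rw [hs, ht]; field_simp; ring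
  rw [← hfin]
  exact mul_le_mul
    (Real.rpow_le_rpow (Finset.sum_nonneg fun i _ => hX0 i) hXW hs0.le)
    (Real.rpow_le_rpow (Finset.sum_nonneg fun i _ => hY0 i) hYW ht0.le)
    (Real.rpow_nonneg (Finset.sum_nonneg fun i _ => hY0 i) _) (Real.rpow_nonneg hW0 _)

theorem bh_S_eq (w z : ℝ) (h : |z| ≤ |w|) :
    |w + z| ^ 3 + |w - z| ^ 3 = 2 * (|w| ^ 3 + 3 * |w| * |z| ^ 2) := by
  rcases abs_cases w with ⟨h1, h1'⟩ | ⟨h1, h1'⟩ <;> rcases abs_cases z with ⟨h2, h2'⟩ | ⟨h2, h2'⟩ <;>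
    rcases abs_cases (w + z) with ⟨h3, h3'⟩ | ⟨h3, h3'⟩ <;>
    rcases abs_cases (w - z) with ⟨h4, h4'⟩ | ⟨h4, h4'⟩ <;>
    rw [h1, h2] at h <;> rw [h1, h2, h3, h4] <;>
    first
    | ring1
    | (exfalso; linarith)
    | (have : z = w := by linarith
       subst this; ring1)
    | (have : z = -w := by linarith
       subst this; ring1)

theorem bh_S_eq' (w z : ℝ) (h : |w| ≤ |z|) :
    |w + z| ^ 3 + |w - z| ^ 3 = 2 * (|z| ^ 3 + 3 * |z| * |w| ^ 2) := by
  have := bh_S_eq z w h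
  rw [add_comm w z, abs_sub_comm w z]
  exact this

theorem bh_tangent (w a : ℝ) : ∃ k : ℝ, ∀ z : ℝ,
    |w + a| ^ 3 + |w - a| ^ 3 + k * (z ^ 2 - a ^ 2) ≤ |w + z| ^ 3 + |w - z| ^ 3 := by
  rcases le_or_gt |a| |w| with h | h
  · refine ⟨6 * |w|, fun z => ?_⟩
    rw [bh_S_eq w a h, ← sq_abs z, ← sq_abs a]
    rcases le_total |z| |w| with h' | h'
    · rw [bh_S_eq w z h']
      apply le_of_eq; ring
    · rw [bh_S_eq' w z h']
      have : 0 ≤ (|z| - |w|) ^ 3 := pow_nonneg (by linarith) 3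
      nlinarith
  · refine ⟨3 * (|a| + |w| ^ 2 / |a|), fun z => ?_⟩
    rw [bh_S_eq' w a h.le, ← sq_abs z, ← sq_abs a]
    have hw := abs_nonneg w
    have hz := abs_nonneg z
    generalize hA : |a| = A at *
    generalize hWW : |w| = W at *
    have hA0 : 0 < A := by linarith
    have hk : 3 * (A + W ^ 2 / A) = 3 * (A ^ 2 + W ^ 2) / A := by field_simp
    rw [hk]
    have aux : ∀ R : ℝ, 0 ≤ R * A - 2 * (A ^ 3 + 3 * A * W ^ 2) * A
        - 3 * (A ^ 2 + W ^ 2) * (|z| ^ 2 - A ^ 2) →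
        2 * (A ^ 3 + 3 * A * W ^ 2) + 3 * (A ^ 2 + W ^ 2) / A * (|z| ^ 2 - A ^ 2) ≤ R := by
      intro R hR
      have : 2 * (A ^ 3 + 3 * A * W ^ 2) + 3 * (A ^ 2 + W ^ 2) / A * (|z| ^ 2 - A ^ 2)
        = (2 * (A ^ 3 + 3 * A * W ^ 2) * A + 3 * (A ^ 2 + W ^ 2) * (|z| ^ 2 - A ^ 2)) / A := by
        field_simp
      rw [this, div_le_iff₀ hA0]
      linarith
    rcases le_total |z| W with h' | h'
    · rw [bh_S_eq w z (by rw [hWW]; exact h'), hWW]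
      apply aux
      generalize |z| = Z at *
      have h1 : 0 ≤ (A - W) ^ 3 * (A + 3 * W) :=
        mul_nonneg (pow_nonneg (by linarith) 3) (by linarith)
      have h2 : 0 ≤ (W ^ 2 - Z ^ 2) * (A - W) ^ 2 :=
        mul_nonneg (by nlinarith) (sq_nonneg _)
      nlinarith
    · rw [bh_S_eq' w z (by rw [hWW]; exact h'), hWW]
      apply aux
      generalize |z| = Z at *
      have h1 : 0 ≤ (Z - A) ^ 2 * (A * Z + A ^ 2 / 2 - 3 / 2 * W ^ 2) := by
        refine mul_nonneg (sq_nonneg _) ?_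
        nlinarith
      nlinarith

open MeasureTheory ProbabilityTheory NNReal in
theorem bh_integrable (x : ℝ) (v : ℝ≥0) :
    Integrable (fun y => |x + y| ^ 3) (gaussianReal 0 v) := by
  have h1 : MemLp (fun y : ℝ => x + y) 3 (gaussianReal 0 v) := by
    have h := memLp_id_gaussianReal (μ := 0) (v := v) 3
    exact (memLp_const x).add h
  have := h1.integrable_norm_pow (by norm_num)
  simpa using this

open MeasureTheory ProbabilityTheory NNReal in
theorem bh_jensen (w a : ℝ) :
    |w + a| ^ 3 + |w - a| ^ 3 ≤ 2 * ∫ z, |w + z| ^ 3 ∂(gaussianReal 0 (‖a‖₊ ^ 2)) := by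
  obtain ⟨k, hk⟩ := bh_tangent w a
  set γ := gaussianReal 0 (‖a‖₊ ^ 2) with hγ
  have hi := bh_integrable w (‖a‖₊ ^ 2)
  have hneg : γ.map (fun y => -y) = γ := by
    rw [hγ, gaussianReal_map_neg]; simp
  have hi' : Integrable (fun z => |w - z| ^ 3) γ := by
    have h : Integrable (fun y => |w + y| ^ 3) (γ.map (fun y => -y)) := by rw [hneg]; exact hi
    have := h.comp_measurable (by fun_prop)
    simpa [Function.comp_def, sub_eq_add_neg] using this
  have heq : ∫ z, |w - z| ^ 3 ∂γ = ∫ z, |w + z| ^ 3 ∂γ := by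
    conv_rhs => rw [← hneg]
    rw [integral_map (by fun_prop) (by fun_prop)]
    simp [sub_eq_add_neg]
  have hsq : ∫ z, z ^ 2 ∂γ = a ^ 2 := by
    have h := variance_fun_id_gaussianReal (μ := 0) (v := ‖a‖₊ ^ 2)
    rw [variance_eq_integral (by fun_prop)] at h
    simpa using h
  have hsqi : Integrable (fun z : ℝ => z ^ 2) γ := by
    have := (memLp_id_gaussianReal (μ := 0) (v := ‖a‖₊ ^ 2) 2)
    exact this.integrable_sq
  have hm := integral_mono (μ := γ) (f := fun z => |w + a| ^ 3 + |w - a| ^ 3 + k * (z ^ 2 - a ^ 2))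
    (g := fun z => |w + z| ^ 3 + |w - z| ^ 3)
    ((integrable_const _).add ((hsqi.sub (integrable_const _)).const_mul k)) (hi.add hi') hk
  have hc : ∫ z, (|w + a| ^ 3 + |w - a| ^ 3 + k * (z ^ 2 - a ^ 2)) ∂γ
      = |w + a| ^ 3 + |w - a| ^ 3 := by
    have hq : Integrable (fun z : ℝ => k * (z ^ 2 - a ^ 2)) γ :=
      (hsqi.sub (integrable_const _)).const_mul k
    rw [integral_add (integrable_const _) hq, integral_const_mul,
      integral_sub hsqi (integrable_const _), hsq]
    simp
  rw [integral_add hi hi', heq, hc] at hm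
  linarith

def bhSg (b : Bool) : ℝ := if b then 1 else -1

theorem bh_sum_bool {N : ℕ} (f : (Fin (N + 1) → Bool) → ℝ) :
    ∑ e, f e = ∑ b, ∑ e : Fin N → Bool, f (Fin.cons b e) := by
  rw [← (Fin.consEquiv (fun _ : Fin (N + 1) => Bool)).sum_comp, Fintype.sum_prod_type]
  rfl

open MeasureTheory ProbabilityTheory NNReal in
theorem bh_third (N : ℕ) : ∀ (a : Fin N → ℝ) (x : ℝ),
    ∑ e : Fin N → Bool, |x + ∑ i, a i * bhSg (e i)| ^ 3 ≤
      2 ^ N * ∫ y, |x + y| ^ 3 ∂(gaussianReal 0 (∑ i, ‖a i‖₊ ^ 2)) := by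
  induction N with
  | zero => intro a x; simp
  | succ N ih =>
    intro a x
    rw [bh_sum_bool]
    simp only [Fin.sum_univ_succ, Fin.cons_zero, Fin.cons_succ, Fintype.univ_bool,
      Finset.mem_singleton, Bool.true_eq_false, not_false_eq_true, Finset.sum_insert,
      Finset.sum_singleton]
    set v := ∑ i : Fin N, ‖a i.succ‖₊ ^ 2 with hv
    have h1 := ih (fun i => a i.succ) (x + a 0)
    have h2 := ih (fun i => a i.succ) (x - a 0)
    rw [← hv] at h1 h2
    have hconv : gaussianReal 0 (‖a 0‖₊ ^ 2 + v) =
        (gaussianReal 0 v) ∗ (gaussianReal 0 (‖a 0‖₊ ^ 2)) := by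
      rw [gaussianReal_conv_gaussianReal, add_comm v, add_zero]
    have hint : Integrable (fun y => |x + y| ^ 3)
        ((gaussianReal 0 v) ∗ (gaussianReal 0 (‖a 0‖₊ ^ 2))) := by
      rw [← hconv]; exact bh_integrable _ _
    rw [hconv, integral_conv hint]
    have hint2 := ((integrable_conv_iff hint.1).1 hint).2
    simp only [Real.norm_eq_abs, abs_pow, abs_abs] at hint2
    have hmono : ∫ y, (|x + a 0 + y| ^ 3 + |x - a 0 + y| ^ 3) ∂(gaussianReal 0 v) ≤
        ∫ y, 2 * ∫ z, |x + (y + z)| ^ 3 ∂(gaussianReal 0 (‖a 0‖₊ ^ 2)) ∂(gaussianReal 0 v) := by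
      refine integral_mono ((bh_integrable _ _).add (bh_integrable _ _)) (hint2.const_mul 2) ?_
      intro y
      have := bh_jensen (x + y) (a 0)
      simp only
      have q1 : x + a 0 + y = x + y + a 0 := by ring
      have q2 : x - a 0 + y = x + y - a 0 := by ring
      rw [q1, q2]
      simpa only [add_assoc] using this
    rw [integral_const_mul, integral_add (bh_integrable _ _) (bh_integrable _ _)] at hmono
    have e1 : ∀ e : Fin N → Bool, x + (a 0 * bhSg true + ∑ i, a i.succ * bhSg (e i)) =
        x + a 0 + ∑ i, a i.succ * bhSg (e i) := by intro e; simp [bhSg]; ring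
    have e2 : ∀ e : Fin N → Bool, x + (a 0 * bhSg false + ∑ i, a i.succ * bhSg (e i)) =
        x - a 0 + ∑ i, a i.succ * bhSg (e i) := by intro e; simp [bhSg]; ring
    simp only [e1, e2]
    refine (add_le_add h1 h2).trans ?_
    rw [← mul_add, pow_succ, mul_assoc]
    exact mul_le_mul_of_nonneg_left hmono (by positivity)

theorem bh_second (N : ℕ) : ∀ (a : Fin N → ℝ) (x : ℝ),
    ∑ e : Fin N → Bool, (x + ∑ i, a i * bhSg (e i)) ^ 2 = 2 ^ N * (x ^ 2 + ∑ i, a i ^ 2) := by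
  induction N with
  | zero => intro a x; simp
  | succ N ih =>
    intro a x
    rw [bh_sum_bool]
    simp only [Fin.sum_univ_succ, Fin.cons_zero, Fin.cons_succ, Fintype.univ_bool,
      Finset.mem_singleton, Bool.true_eq_false, not_false_eq_true, Finset.sum_insert,
      Finset.sum_singleton]
    have h1 := ih (fun i => a i.succ) (x + a 0)
    have h2 := ih (fun i => a i.succ) (x - a 0)
    have e1 : ∀ e : Fin N → Bool, x + (a 0 * bhSg true + ∑ i, a i.succ * bhSg (e i)) =
        x + a 0 + ∑ i, a i.succ * bhSg (e i) := by intro e; simp [bhSg]; ring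
    have e2 : ∀ e : Fin N → Bool, x + (a 0 * bhSg false + ∑ i, a i.succ * bhSg (e i)) =
        x - a 0 + ∑ i, a i.succ * bhSg (e i) := by intro e; simp [bhSg]; ring
    simp only [e1, e2, h1, h2]
    ring

open MeasureTheory ProbabilityTheory NNReal in
theorem bh_gauss3 (v : ℝ≥0) :
    ∫ y, |y| ^ 3 ∂(gaussianReal 0 v) ≤ 1.6 * (v : ℝ) ^ (3 / 2 : ℝ) := by
  by_cases hv : v = 0
  · subst hv; simp
  have hv0 : (0 : ℝ) < v := by
    have : 0 < v := pos_iff_ne_zero.2 hv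
    exact_mod_cast this
  rw [integral_gaussianReal_eq_integral_smul hv]
  have h1 : ∀ y : ℝ, gaussianPDFReal 0 v y • |y| ^ 3 =
      (fun t : ℝ => (√(2 * π * v))⁻¹ * (t ^ (3 : ℝ) * rexp (-(1 / (2 * (v : ℝ))) * t ^ (2 : ℝ)))) |y| := by
    intro y
    simp only [gaussianPDFReal, sub_zero, smul_eq_mul]
    rw [Real.rpow_two, sq_abs]
    have : (|y| ^ (3 : ℝ)) = |y| ^ 3 := by exact_mod_cast Real.rpow_natCast |y| 3
    rw [this]
    have : -y ^ 2 / (2 * (v : ℝ)) = -(1 / (2 * (v : ℝ))) * y ^ 2 := by ring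
    rw [this]
    ring
  simp only [h1]
  rw [integral_comp_abs (f := fun t : ℝ => (√(2 * π * v))⁻¹ *
    (t ^ (3 : ℝ) * rexp (-(1 / (2 * (v : ℝ))) * t ^ (2 : ℝ)))), integral_const_mul,
    integral_rpow_mul_exp_neg_mul_rpow (by norm_num) (by norm_num) (by positivity)]
  have g : Gamma ((3 + 1) / 2) = 1 := by
    have : ((3 + 1) / 2 : ℝ) = 2 := by norm_num
    rw [this, Real.Gamma_two]
  have p2 : (1 / (2 * (v : ℝ))) ^ (-(3 + 1) / 2 : ℝ) = 4 * (v : ℝ) ^ 2 := by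
    have : (-(3 + 1) / 2 : ℝ) = -(2 : ℝ) := by norm_num
    rw [this, Real.rpow_neg (by positivity), Real.rpow_two]
    field_simp; norm_num
  rw [g, p2]
  have p3 : (v : ℝ) ^ (3 / 2 : ℝ) = v * √v := by
    have : (3 / 2 : ℝ) = 1 + 1 / 2 := by norm_num
    rw [this, Real.rpow_add hv0, Real.rpow_one, Real.sqrt_eq_rpow]
  rw [p3, Real.sqrt_mul (by positivity)]
  have hs : 0 < √(v : ℝ) := Real.sqrt_pos.2 hv0
  have hss : √(v : ℝ) * √(v : ℝ) = v := Real.mul_self_sqrt hv0.le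
  have hpi : (2.5 : ℝ) ≤ √(2 * π) := by
    apply Real.le_sqrt_of_sq_le
    have := Real.pi_gt_d2
    norm_num at *
    linarith
  have hp0 : 0 < √(2 * π) := by linarith
  have : 2 * ((√(2 * π) * √(v : ℝ))⁻¹ * (4 * (v : ℝ) ^ 2 * (1 / 2) * 1)) =
      (4 * v ^ 2) / (√(2 * π) * √(v : ℝ)) := by field_simp; try ring
  rw [this, div_le_iff₀ (by positivity)]
  have : 1.6 * ((v : ℝ) * √v) * (√(2 * π) * √(v : ℝ)) = 1.6 * √(2 * π) * (v * (√v * √v)) := by ring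
  rw [this, hss]
  have : 0 < (v : ℝ) * v := by positivity
  nlinarith

theorem bh_khinchine (N : ℕ) (a : Fin N → ℝ) (p : ℝ) (hp0 : 0 < p) (hp : p < 2) :
    (∑ i, a i ^ 2) ^ (p / 2) ≤
      1.6 ^ (2 - p) * ((2 ^ N)⁻¹ * ∑ e : Fin N → Bool, |∑ i, a i * bhSg (e i)| ^ p) := by
  set S := ∑ i, a i ^ 2 with hS
  have hS0 : 0 ≤ S := Finset.sum_nonneg fun i _ => sq_nonneg _
  set f : (Fin N → Bool) → ℝ := fun e => |∑ i, a i * bhSg (e i)| with hf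
  have hf0 : ∀ e, 0 ≤ f e := fun e => abs_nonneg _
  change _ ≤ 1.6 ^ (2 - p) * ((2 ^ N)⁻¹ * ∑ e, f e ^ p)
  set P := (2 ^ N)⁻¹ * ∑ e, f e ^ p with hP
  have hPn : 0 ≤ P := mul_nonneg (by positivity)
    (Finset.sum_nonneg fun e _ => Real.rpow_nonneg (hf0 e) _)
  rcases hS0.eq_or_lt with h0 | hSpos
  · rw [← h0, Real.zero_rpow (by positivity)]
    exact mul_nonneg (by positivity) hPn
  have h2 : ∑ e, f e ^ 2 = 2 ^ N * S := by
    have := bh_second N a 0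
    simpa [hf, sq_abs] using this
  have h3 : ∑ e, f e ^ 3 ≤ 2 ^ N * (1.6 * S ^ (3 / 2 : ℝ)) := by
    have h := bh_third N a 0
    simp only [zero_add] at h
    refine h.trans (mul_le_mul_of_nonneg_left ?_ (by positivity))
    refine (bh_gauss3 _).trans (le_of_eq ?_)
    congr 2
    push_cast
    simp [hS]
  have h3p : 0 < 3 - p := by linarith
  set s := 1 / (3 - p) with hs
  set t := (2 - p) / (3 - p) with ht
  have hs0 : 0 < s := by positivity
  have ht0 : 0 < t := div_pos (by linarith) h3p
  have hst : s + t = 1 := by rw [hs, ht]; field_simp; ring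
  have hh := bh_holder2 (fun e => f e ^ p) (fun e => f e ^ 3)
    (fun e => Real.rpow_nonneg (hf0 e) _) (fun e => pow_nonneg (hf0 e) 3) s t hs0 ht0 hst
  have hpt : ∀ e, (f e ^ p) ^ s * (f e ^ 3) ^ t = f e ^ 2 := by
    intro e
    rw [← Real.rpow_natCast (f e) 3, ← Real.rpow_mul (hf0 e), ← Real.rpow_mul (hf0 e),
      ← Real.rpow_add_of_nonneg (hf0 e) (by positivity) (by positivity), ← Real.rpow_natCast (f e) 2]
    congr 1
    rw [hs, ht]; push_cast; field_simp; ring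
  simp only [hpt] at hh
  rw [h2] at hh
  have hPs : ∑ e, f e ^ p = 2 ^ N * P := by rw [hP]; field_simp
  have hc : (0 : ℝ) < 2 ^ N := by positivity
  have hh2 : 2 ^ N * S ≤ (2 ^ N * P) ^ s * (2 ^ N * (1.6 * S ^ (3 / 2 : ℝ))) ^ t := by
    refine hh.trans ?_
    rw [hPs]
    refine mul_le_mul_of_nonneg_left ?_ (by positivity)
    exact Real.rpow_le_rpow (Finset.sum_nonneg fun e _ => pow_nonneg (hf0 e) 3) h3 ht0.le
  have hh3 : S ≤ P ^ s * (1.6 * S ^ (3 / 2 : ℝ)) ^ t := by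
    rw [Real.mul_rpow hc.le hPn, Real.mul_rpow hc.le (by positivity)] at hh2
    have : ((2 : ℝ) ^ N) ^ s * P ^ s * (((2 : ℝ) ^ N) ^ t * (1.6 * S ^ (3 / 2 : ℝ)) ^ t) =
        2 ^ N * (P ^ s * (1.6 * S ^ (3 / 2 : ℝ)) ^ t) := by
      have : ((2 : ℝ) ^ N) ^ s * ((2 : ℝ) ^ N) ^ t = 2 ^ N := by
        rw [← Real.rpow_add hc, hst, Real.rpow_one]
      linear_combination (P ^ s * (1.6 * S ^ (3 / 2 : ℝ)) ^ t) * this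
    rw [this] at hh2
    exact le_of_mul_le_mul_left hh2 hc
  have hh4 := Real.rpow_le_rpow hS0 hh3 h3p.le
  rw [Real.mul_rpow (by positivity) (by positivity), ← Real.rpow_mul hPn,
    ← Real.rpow_mul (by positivity)] at hh4
  have e1 : s * (3 - p) = 1 := by rw [hs]; field_simp
  have e2 : t * (3 - p) = 2 - p := by rw [ht]; field_simp
  rw [e1, e2, Real.rpow_one, Real.mul_rpow (by norm_num) (by positivity), ← Real.rpow_mul hS0] at hh4
  have e3 : S ^ (3 - p) = S ^ (p / 2) * S ^ (3 / 2 * (2 - p)) := by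
    rw [← Real.rpow_add hSpos]; congr 1; ring
  rw [e3] at hh4
  have hpos : 0 < S ^ (3 / 2 * (2 - p)) := by positivity
  refine le_of_mul_le_mul_right ?_ hpos
  refine hh4.trans (le_of_eq ?_)
  ring

noncomputable def bhC (k : ℕ) : ℝ := 1.6 ^ (∑ l ∈ Finset.range k, 1 / ((l : ℝ) + 1))

theorem bhC_succ (k : ℕ) : bhC (k + 1) = 1.6 ^ (1 / ((k : ℝ) + 1)) * bhC k := by
  rw [bhC, bhC, Finset.sum_range_succ, Real.rpow_add (by norm_num), mul_comm]

theorem bhC_pos (k : ℕ) : 0 < bhC k := Real.rpow_pos_of_pos (by norm_num) _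

theorem bh_main (N k : ℕ) : ∀ (a : (Fin (k + 1) → Fin N) → ℝ) (M : ℝ),
    (∀ e : Fin (k + 1) → Fin N → Bool, |∑ i, a i * ∏ l, bhSg (e l (i l))| ≤ M) →
    ∑ i, |a i| ^ (2 * ((k : ℝ) + 1) / (k + 2)) ≤ (bhC k * M) ^ (2 * ((k : ℝ) + 1) / (k + 2)) := by
  induction k with
  | zero =>
    intro a M hM
    have h := hM (fun _ x => decide (0 ≤ a (fun _ => x)))
    have e1 : (2 * (((0 : ℕ) : ℝ) + 1) / (((0 : ℕ) : ℝ) + 2)) = 1 := by norm_num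
    rw [e1]
    simp only [Real.rpow_one]
    have : bhC 0 = 1 := by simp [bhC]
    rw [this, one_mul]
    refine le_trans (le_of_eq ?_) ((le_abs_self _).trans h)
    refine Finset.sum_congr rfl fun i _ => ?_
    have hp : ∏ l : Fin (0 + 1), bhSg (decide (0 ≤ a (fun _ => i l))) =
        bhSg (decide (0 ≤ a (fun _ => i 0))) := Fin.prod_univ_one _
    have hi : (fun _ : Fin (0 + 1) => i 0) = i := by
      funext l; congr 1; exact (Fin.fin_one_eq_zero l).symm
    rw [hp, hi]
    by_cases h0 : 0 ≤ a i
    · simp [bhSg, h0, abs_of_nonneg h0]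
    · simp [bhSg, h0, abs_of_neg (not_le.1 h0)]
  | succ k ih =>
    intro a M hM
    have hM0 : 0 ≤ M := (abs_nonneg _).trans (hM (fun _ _ => true))
    set p : ℝ := 2 * ((k : ℝ) + 1) / (k + 2) with hp
    have hp0 : 0 < p := by positivity
    have hp2 : p < 2 := by rw [hp, div_lt_iff₀ (by positivity)]; linarith
    have hCM : 0 ≤ bhC k * M := mul_nonneg (bhC_pos k).le hM0
    have hCM' : 0 ≤ bhC (k + 1) * M := mul_nonneg (bhC_pos _).le hM0
    have hcontr : ∀ (j : Fin (k + 2)) (e : Fin N → Bool),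
        ∑ y : Fin (k + 1) → Fin N, |∑ x, a (bhIns j x y) * bhSg (e x)| ^ p ≤ (bhC k * M) ^ p := by
      intro j e
      refine ih (fun y => ∑ x, a (bhIns j x y) * bhSg (e x)) M ?_
      intro e'
      refine le_trans (le_of_eq ?_) (hM (Fin.insertNth (α := fun _ => Fin N → Bool) j e e'))
      congr 1
      rw [bh_sum_ins j, Finset.sum_comm]
      refine Finset.sum_congr rfl fun y _ => ?_
      rw [Finset.sum_mul]
      refine Finset.sum_congr rfl fun x _ => ?_
      rw [Fin.prod_univ_succAbove _ j, mul_assoc]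
      simp [bhIns]
    have hW : ∀ j : Fin (k + 2), ∑ y : Fin (k + 1) → Fin N,
        (∑ x, |a (bhIns j x y)| ^ 2) ^ (((k : ℝ) + 1) / (k + 2)) ≤ (bhC (k + 1) * M) ^ p := by
      intro j
      have hpp : ((k : ℝ) + 1) / (k + 2) = p / 2 := by rw [hp]; ring
      rw [hpp]
      simp only [sq_abs]
      refine (Finset.sum_le_sum fun y _ =>
        bh_khinchine N (fun x => a (bhIns j x y)) p hp0 hp2).trans ?_
      rw [← Finset.mul_sum, ← Finset.mul_sum, Finset.sum_comm]
      have h1 : ∑ e : Fin N → Bool, ∑ y : Fin (k + 1) → Fin N,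
          |∑ x, a (bhIns j x y) * bhSg (e x)| ^ p ≤ 2 ^ N * (bhC k * M) ^ p := by
        refine (Finset.sum_le_sum fun e _ => hcontr j e).trans (le_of_eq ?_)
        simp
      have h2 : ((2 : ℝ) ^ N)⁻¹ * ∑ e : Fin N → Bool, ∑ y : Fin (k + 1) → Fin N,
          |∑ x, a (bhIns j x y) * bhSg (e x)| ^ p ≤ (bhC k * M) ^ p := by
        rw [inv_mul_le_iff₀ (by positivity)]; exact h1
      refine (mul_le_mul_of_nonneg_left h2 (by positivity)).trans (le_of_eq ?_)
      rw [bhC_succ, mul_assoc, Real.mul_rpow (by positivity) hCM, ← Real.rpow_mul (by norm_num)]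
      congr 2
      rw [hp]; field_simp; ring
    have hb := bh_blei N k (fun i => |a i|) (fun i => abs_nonneg _) _ hW
    rw [← Real.rpow_mul hCM'] at hb
    have e1 : p * (((k : ℝ) + 2) ^ 2 / ((k + 3) * (k + 1))) = 2 * ((k : ℝ) + 2) / (k + 3) := by
      rw [hp]; field_simp
    have e2 : 2 * (((k + 1 : ℕ) : ℝ) + 1) / (((k + 1 : ℕ) : ℝ) + 2) = 2 * ((k : ℝ) + 2) / (k + 3) := by
      push_cast; ring
    rw [e1] at hb
    rw [e2]
    exact hb

theorem bhC_le (k : ℕ) (hk : 256 ≤ k) : bhC k ≤ 1.303787 * (k : ℝ) ^ (0.526322 : ℝ) := by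
  have hk0 : (256 : ℝ) ≤ k := by exact_mod_cast hk
  have hkp : (0 : ℝ) < k := by linarith
  have hH : ∑ l ∈ Finset.range k, 1 / ((l : ℝ) + 1) ≤ 1 + Real.log k := by
    have := harmonic_le_one_add_log k
    simpa [harmonic] using this
  have h1 : bhC k ≤ 1.6 * 1.6 ^ (Real.log k) := by
    rw [bhC]
    refine (Real.rpow_le_rpow_of_exponent_le (by norm_num) hH).trans (le_of_eq ?_)
    rw [Real.rpow_add (by norm_num), Real.rpow_one]
  have hlog : Real.log 1.6 ≤ 0.48 := by
    have h : Real.log ((1.6 : ℝ) ^ 25) ≤ 12 := by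
      rw [Real.log_le_iff_le_exp (by norm_num)]
      have : Real.exp 12 = Real.exp 1 ^ 12 := by rw [← Real.exp_nat_mul]; norm_num
      rw [this]
      calc (1.6 : ℝ) ^ 25 ≤ 2.718 ^ 12 := by norm_num
        _ ≤ _ := pow_le_pow_left₀ (by norm_num) (by linarith [Real.exp_one_gt_d9]) _
    rw [Real.log_pow] at h
    push_cast at h
    linarith
  have h2 : (1.6 : ℝ) ^ (Real.log k) ≤ (k : ℝ) ^ (0.48 : ℝ) := by
    rw [Real.rpow_def_of_pos (by norm_num), Real.rpow_def_of_pos hkp, Real.exp_le_exp,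
      mul_comm (Real.log k)]
    exact mul_le_mul_of_nonneg_right hlog (Real.log_nonneg (by linarith))
  have h3 : (1.25 : ℝ) ≤ (k : ℝ) ^ (0.046322 : ℝ) := by
    have ha : (1.25 : ℝ) ≤ (256 : ℝ) ^ (0.046322 : ℝ) := by
      have e : (256 : ℝ) = 2 ^ (8 : ℝ) := by norm_num
      rw [e, ← Real.rpow_mul (by norm_num)]
      have : (2 : ℝ) ^ (1 / 3 : ℝ) ≤ 2 ^ ((8 : ℝ) * 0.046322) :=
        Real.rpow_le_rpow_of_exponent_le (by norm_num) (by norm_num)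
      refine le_trans ?_ this
      have h5 : (1.25 : ℝ) = (1.25 ^ (3 : ℝ)) ^ (1 / 3 : ℝ) := by
        rw [← Real.rpow_mul (by norm_num)]; norm_num
      rw [h5]
      exact Real.rpow_le_rpow (by positivity) (by norm_num) (by norm_num)
    exact ha.trans (Real.rpow_le_rpow (by norm_num) hk0 (by norm_num))
  have h4 : (k : ℝ) ^ (0.526322 : ℝ) = (k : ℝ) ^ (0.48 : ℝ) * (k : ℝ) ^ (0.046322 : ℝ) := by
    rw [← Real.rpow_add hkp]; norm_num
  rw [h4]
  have h0 : 0 < (k : ℝ) ^ (0.48 : ℝ) := by positivity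
  nlinarith [mul_le_mul_of_nonneg_left h3 h0.le]

theorem stmt8 (n : ℕ) (hn : 2 ^ 8 < n) (N : ℕ) (hN : 0 < N)
    (U : ContinuousMultilinearMap ℝ (fun _ : Fin n => (Fin N → ℝ)) ℝ) :
    BHreal n N U ≤ 1.303787 * ((n : ℝ) - 1) ^ (0.526322 : ℝ) * ‖U‖ := by
  obtain ⟨k, rfl⟩ : ∃ k, n = k + 1 := ⟨n - 1, by omega⟩
  have hk : 256 ≤ k := by norm_num at hn; omega
  have hmain := bh_main N k (fun i => U (fun l => Pi.single (i l) (1 : ℝ))) ‖U‖ (by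
    intro e
    have hz : U (fun l => fun x => bhSg (e l x)) =
        ∑ i : Fin (k + 1) → Fin N, U (fun l => Pi.single (i l) (1 : ℝ)) *
          ∏ l, bhSg (e l (i l)) := by
      have h1 : (fun (l : Fin (k + 1)) => fun x => bhSg (e l x)) =
          fun l => ∑ x, bhSg (e l x) • (Pi.single x (1 : ℝ) : Fin N → ℝ) := by
        funext l x
        simp [Finset.sum_apply, Pi.single_apply]
      rw [h1, ContinuousMultilinearMap.map_sum]
      refine Finset.sum_congr rfl fun i _ => ?_
      rw [ContinuousMultilinearMap.map_smul_univ, smul_eq_mul, mul_comm]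
    rw [← hz, ← Real.norm_eq_abs]
    refine (U.le_opNorm _).trans ?_
    refine mul_le_of_le_one_right (norm_nonneg _) ?_
    refine Finset.prod_le_one (fun l _ => norm_nonneg _) (fun l _ => ?_)
    rw [pi_norm_le_iff_of_nonneg zero_le_one]
    intro x
    unfold bhSg
    split_ifs <;> simp)
  have hU := norm_nonneg U
  have hC : 0 ≤ bhC k * ‖U‖ := mul_nonneg (bhC_pos k).le hU
  unfold BHreal
  have e1 : (2 * ((k + 1 : ℕ) : ℝ)) / (((k + 1 : ℕ) : ℝ) + 1) = 2 * ((k : ℝ) + 1) / (k + 2) := by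
    push_cast; ring
  have e2 : (((k + 1 : ℕ) : ℝ) + 1) / (2 * ((k + 1 : ℕ) : ℝ)) = (2 * ((k : ℝ) + 1) / (k + 2))⁻¹ := by
    rw [inv_div]; push_cast; ring
  have e3 : (((k + 1 : ℕ) : ℝ) - 1) = k := by push_cast; ring
  rw [e1, e2, e3]
  have h1 := Real.rpow_le_rpow (Finset.sum_nonneg fun i _ => Real.rpow_nonneg (abs_nonneg _) _)
    hmain (by positivity : 0 ≤ (2 * ((k : ℝ) + 1) / (k + 2))⁻¹)
  rw [Real.rpow_rpow_inv hC (by positivity)] at h1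
  exact h1.trans (mul_le_mul_of_nonneg_right (bhC_le k hk) hU)
end
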